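/- arXiv:1009.0216 — 14 statements merged into one kernel-verified Lean document; each statement's English description precedes it below -/
import Mathlib

section
/- Let G be a finite simple graph admitting a permutation model: injective maps π, ρ : V(G) → ℝ such that two distinct vertices u, v are adjacent in G if and only if (π(u) < π(v) and ρ(v) < ρ(u)) or (π(v) < π(u) and ρ(u) < ρ(v)). Then for every t ∈ ℝ, setting A = {v ∈ V(G) : π(v) < t}, every nonempty subset X ⊆ A contains a vertex x with N(X) ∩ (V(G) ∖ A) = N(x) ∩ (V(G) ∖ A); consequently the cut-neighbourhood family of A has at most |A| + 1 elements. (This witnesses that every n-vertex permutation graph has boolean-width at most log₂ n, via the caterpillar decomposition ordered by π.) -/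
/-- `nbhds G X` is `N(X)`, the union of the open neighbourhoods of the vertices of `X`. -/
def nbhds {V : Type*} (G : SimpleGraph V) (X : Set V) : Set V :=
  {v | ∃ x ∈ X, G.Adj x v}

/-- The cut-neighbourhood family of `A`: `{N(X) ∩ (V ∖ A) : X ⊆ A}`. -/
def cutNbhdFamily {V : Type*} (G : SimpleGraph V) (A : Set V) : Set (Set V) :=
  {S | ∃ X ⊆ A, S = nbhds G X ∩ Aᶜ}

theorem permutation_graph_cut_nbhds {V : Type*} [Fintype V] (G : SimpleGraph V)
    (π ρ : V → ℝ) (hπ : Function.Injective π) (hρ : Function.Injective ρ)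
    (hmodel : ∀ u v : V, u ≠ v →
      (G.Adj u v ↔ (π u < π v ∧ ρ v < ρ u) ∨ (π v < π u ∧ ρ u < ρ v)))
    (t : ℝ) (A : Set V) (hA : A = {v | π v < t}) :
    (∀ X : Set V, X ⊆ A → X.Nonempty →
        ∃ x ∈ X, nbhds G X ∩ Aᶜ = G.neighborSet x ∩ Aᶜ) ∧
      (cutNbhdFamily G A).ncard ≤ A.ncard + 1 := by
  have key : ∀ x ∈ A, ∀ v ∈ Aᶜ, (G.Adj x v ↔ ρ v < ρ x) := by
    intro x hx v hv
    subst hA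
    simp only [Set.mem_setOf_eq, Set.mem_compl_iff, not_lt] at hx hv
    have hlt : π x < π v := lt_of_lt_of_le hx hv
    have hne : x ≠ v := by
      rintro rfl
      exact lt_irrefl _ hlt
    rw [hmodel x v hne]
    constructor
    · rintro (h | h)
      · exact h.2
      · exact absurd h.1 (not_lt.mpr hlt.le)
    · intro h
      exact Or.inl ⟨hlt, h⟩
  have first : ∀ X : Set V, X ⊆ A → X.Nonempty →
      ∃ x ∈ X, nbhds G X ∩ Aᶜ = G.neighborSet x ∩ Aᶜ := by
    intro X hX hne
    obtain ⟨x, hx, hmax⟩ := Set.exists_max_image X ρ X.toFinite hne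
    refine ⟨x, hx, ?_⟩
    ext v
    constructor
    · rintro ⟨⟨y, hy, hyv⟩, hv⟩
      exact ⟨(key x (hX hx) v hv).2
        (lt_of_lt_of_le ((key y (hX hy) v hv).1 hyv) (hmax y hy)), hv⟩
    · rintro ⟨h, hv⟩
      exact ⟨⟨x, hx, h⟩, hv⟩
  refine ⟨first, ?_⟩
  have hsub : cutNbhdFamily G A ⊆
      insert ∅ ((fun x => G.neighborSet x ∩ Aᶜ) '' A) := by
    rintro S ⟨X, hX, rfl⟩
    rcases X.eq_empty_or_nonempty with rfl | hne
    · left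
      ext v
      simp [nbhds]
    · obtain ⟨x, hx, h⟩ := first X hX hne
      exact Or.inr ⟨x, hX hx, h.symm⟩
  calc (cutNbhdFamily G A).ncard
      ≤ (insert ∅ ((fun x => G.neighborSet x ∩ Aᶜ) '' A)).ncard :=
        Set.ncard_le_ncard hsub (Set.toFinite _)
    _ ≤ ((fun x => G.neighborSet x ∩ Aᶜ) '' A).ncard + 1 := Set.ncard_insert_le _ _
    _ ≤ A.ncard + 1 := Nat.add_le_add_right (Set.ncard_image_le A.toFinite) 1
end

section
/- Let G be a finite simple graph with nonempty vertex set admitting an interval model: maps l, r : V(G) → ℝ with l(v) ≤ r(v) for all v, such that two distinct vertices u, v are adjacent if and only if l(u) ≤ r(v) and l(v) ≤ r(u). Then for every t ∈ ℝ, setting A = {v ∈ V(G) : l(v) < t}: (i) every nonempty subset X ⊆ A contains a vertex x with N(X) ∩ (V(G) ∖ A) = N(x) ∩ (V(G) ∖ A); and (ii) the cut-neighbourhood family of A has at most ω(G) elements, where ω(G) is the clique number of G. (This witnesses that every interval graph has boolean-width at most log₂ of its clique number.) -/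
theorem interval_graph_cut_nbhds {V : Type*} [Fintype V] [Nonempty V] (G : SimpleGraph V)
    (l r : V → ℝ) (hlr : ∀ v, l v ≤ r v)
    (hmodel : ∀ u v : V, u ≠ v → (G.Adj u v ↔ l u ≤ r v ∧ l v ≤ r u))
    (t : ℝ) (A : Set V) (hA : A = {v | l v < t}) :
    (∀ X : Set V, X ⊆ A → X.Nonempty →
        ∃ x ∈ X, nbhds G X ∩ Aᶜ = G.neighborSet x ∩ Aᶜ) ∧
      (cutNbhdFamily G A).ncard ≤ G.cliqueNum := by
  classical
  have memA : ∀ v, v ∈ A ↔ l v < t := by intro v; rw [hA]; rfl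
  have adj : ∀ x v, x ∈ A → v ∉ A → (G.Adj x v ↔ l v ≤ r x) := by
    intro x v hx hv
    have hne : x ≠ v := by rintro rfl; exact hv hx
    rw [memA] at hx hv
    rw [hmodel x v hne]
    have := hlr v
    constructor
    · exact fun h => h.2
    · intro h; exact ⟨by linarith, h⟩
  have part1 : ∀ X : Set V, X ⊆ A → X.Nonempty →
        ∃ x ∈ X, nbhds G X ∩ Aᶜ = G.neighborSet x ∩ Aᶜ := by
    intro X hX hne
    obtain ⟨x, hx, hmax⟩ := Set.exists_max_image X r X.toFinite hne
    refine ⟨x, hx, ?_⟩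
    ext v
    constructor
    · rintro ⟨⟨y, hy, hyv⟩, hv⟩
      refine ⟨?_, hv⟩
      exact (adj x v (hX hx) hv).2 (((adj y v (hX hy) hv).1 hyv).trans (hmax y hy))
    · rintro ⟨h, hv⟩
      exact ⟨⟨x, hx, h⟩, hv⟩
  refine ⟨part1, ?_⟩
  set F := cutNbhdFamily G A with hF
  have key : ∀ S : Set V, ∃ x : V, S ∈ F \ {∅} → x ∈ A ∧ S = G.neighborSet x ∩ Aᶜ := by
    intro S
    by_cases hS : S ∈ F \ {∅}
    · obtain ⟨⟨X, hXA, rfl⟩, hne⟩ := hS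
      have hX : X.Nonempty := by
        rw [Set.nonempty_iff_ne_empty]
        rintro rfl
        apply hne
        simp [nbhds]
      obtain ⟨x, hx, h⟩ := part1 X hXA hX
      exact ⟨x, fun _ => ⟨hXA hx, h⟩⟩
    · exact ⟨Classical.arbitrary V, fun h => absurd h hS⟩
  choose f hf using key
  have hinj : Set.InjOn f (F \ {∅}) := by
    intro S hS T hT h
    rw [(hf S hS).2, (hf T hT).2, h]
  set C := f '' (F \ {∅}) with hC
  have hCcard : C.ncard = (F \ {∅}).ncard := Set.ncard_image_of_injOn hinj
  have hCA : ∀ x ∈ C, x ∈ A ∧ ∃ w, w ∉ A ∧ l w ≤ r x := by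
    rintro _ ⟨S, hS, rfl⟩
    obtain ⟨h1, h2⟩ := hf S hS
    refine ⟨h1, ?_⟩
    obtain ⟨w, hw⟩ : S.Nonempty := Set.nonempty_iff_ne_empty.2 hS.2
    rw [h2] at hw
    exact ⟨w, hw.2, (adj _ _ h1 hw.2).1 hw.1⟩
  have hclique : G.IsClique C := by
    intro x hx y hy hxy
    obtain ⟨hxA, w, hw, hwx⟩ := hCA x hx
    obtain ⟨hyA, z, hz, hzy⟩ := hCA y hy
    rw [memA] at hxA hyA hw hz
    rw [hmodel x y hxy]
    constructor <;> linarith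
  obtain ⟨v, hvC, hv⟩ : ∃ v, v ∉ C ∧ ∀ x ∈ C, G.Adj v x := by
    by_cases hne : (Aᶜ : Set V).Nonempty
    · obtain ⟨v, hv, hmin⟩ := Set.exists_min_image Aᶜ l (Set.toFinite _) hne
      refine ⟨v, fun h => hv (hCA v h).1, fun x hx => ?_⟩
      obtain ⟨hxA, w, hw, hwx⟩ := hCA x hx
      exact ((adj x v hxA hv).2 ((hmin w hw).trans hwx)).symm
    · have : ∀ x, x ∉ C := by
        intro x hx
        obtain ⟨_, w, hw, _⟩ := hCA x hx
        exact hne ⟨w, hw⟩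
      exact ⟨Classical.arbitrary V, this _, fun x hx => absurd hx (this x)⟩
  have hcl2 : G.IsClique (insert v C) := hclique.insert (fun b hb _ => hv b hb)
  have h1 : (insert v C).ncard = C.ncard + 1 := Set.ncard_insert_of_notMem hvC
  have h2 : (insert v C).ncard ≤ G.cliqueNum := by
    rw [Set.ncard_eq_toFinset_card']
    apply SimpleGraph.IsClique.card_le_cliqueNum
    simpa using hcl2
  have h3 : F.ncard ≤ (F \ {∅}).ncard + 1 := by
    have := Set.ncard_le_ncard_diff_add_ncard F {∅}
    simpa using this
  omega
end

section
/- Let G be a finite simple graph admitting a trapezoid model: maps tl, tr, bl, br : V(G) → ℝ with tl(v) ≤ tr(v) and bl(v) ≤ br(v) for all v, such that two distinct vertices u, v are adjacent if and only if neither (tr(u) < tl(v) and br(u) < bl(v)) nor (tr(v) < tl(u) and br(v) < bl(u)) holds. Then for every t ∈ ℝ, setting A = {v ∈ V(G) : tr(v) < t}, every nonempty subset S ⊆ A has a subset S' ⊆ S with |S'| ≤ 2 and N(S) ∩ (V(G) ∖ A) = N(S') ∩ (V(G) ∖ A); consequently the cut-neighbourhood family of A has at most 1 + |A| + |A|(|A|−1)/2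 elements. (This witnesses that every n-vertex trapezoid graph has boolean-width at most 2 log₂ n.) -/
theorem trapezoid_graph_cut_nbhds {V : Type*} [Fintype V] (G : SimpleGraph V)
    (tl tr bl br : V → ℝ) (htop : ∀ v, tl v ≤ tr v) (hbot : ∀ v, bl v ≤ br v)
    (hmodel : ∀ u v : V, u ≠ v →
      (G.Adj u v ↔ ¬(tr u < tl v ∧ br u < bl v) ∧ ¬(tr v < tl u ∧ br v < bl u)))
    (t : ℝ) (A : Set V) (hA : A = {v | tr v < t}) :
    (∀ S : Set V, S ⊆ A → S.Nonempty →
        ∃ S' ⊆ S, S'.ncard ≤ 2 ∧ nbhds G S ∩ Aᶜ = nbhds G S' ∩ Aᶜ) ∧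
      (cutNbhdFamily G A).ncard ≤ 1 + A.ncard + A.ncard * (A.ncard - 1) / 2 := by
  have key : ∀ u ∈ A, ∀ v ∉ A, (G.Adj u v ↔ tl v ≤ tr u ∨ bl v ≤ br u) := by
    intro u hu v hv
    have hne : u ≠ v := fun h => hv (h ▸ hu)
    rw [hmodel u v hne]
    rw [hA] at hu hv
    simp only [Set.mem_ofPred_eq, not_lt] at hu hv
    have h1 := htop u
    constructor
    · rintro ⟨h, -⟩
      by_contra! hc
      exact h hc
    · intro h
      refine ⟨fun hc => ?_, fun hc => ?_⟩
      · rcases h with h | h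
        · linarith [hc.1]
        · linarith [hc.2]
      · linarith [hc.1]
  have main : ∀ S : Set V, S ⊆ A → S.Nonempty →
        ∃ S' ⊆ S, S'.ncard ≤ 2 ∧ nbhds G S ∩ Aᶜ = nbhds G S' ∩ Aᶜ := by
    intro S hS hne
    obtain ⟨a, ha, hamax⟩ := Set.exists_max_image S tr S.toFinite hne
    obtain ⟨b, hb, hbmax⟩ := Set.exists_max_image S br S.toFinite hne
    have hsub : ({a, b} : Set V) ⊆ S := by
      rintro x (rfl | rfl) <;> assumption
    refine ⟨{a, b}, hsub, (Set.ncard_insert_le a {b}).trans (by simp), ?_⟩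
    ext v
    constructor
    · rintro ⟨⟨x, hx, hadj⟩, hv⟩
      refine ⟨?_, hv⟩
      rcases (key x (hS hx) v hv).1 hadj with h | h
      · exact ⟨a, by simp, (key a (hS ha) v hv).2 (Or.inl (h.trans (hamax x hx)))⟩
      · exact ⟨b, by simp, (key b (hS hb) v hv).2 (Or.inr (h.trans (hbmax x hx)))⟩
    · rintro ⟨⟨x, hx, hadj⟩, hv⟩
      exact ⟨⟨x, hsub hx, hadj⟩, hv⟩
  refine ⟨main, ?_⟩
  classical
  let P : Finset (Finset V) := (Finset.powersetCard 0 A.toFinset ∪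
    Finset.powersetCard 1 A.toFinset) ∪ Finset.powersetCard 2 A.toFinset
  let F : Finset V → Set V := fun X => nbhds G (X : Set V) ∩ Aᶜ
  have hsub : cutNbhdFamily G A ⊆ ((P.image F : Finset (Set V)) : Set (Set V)) := by
    rintro _ ⟨X, hX, rfl⟩
    obtain ⟨Y, hY, hc, he⟩ : ∃ Y ⊆ X, Y.ncard ≤ 2 ∧ nbhds G X ∩ Aᶜ = nbhds G Y ∩ Aᶜ := by
      rcases X.eq_empty_or_nonempty with h | h
      · exact ⟨X, subset_rfl, by simp [h], rfl⟩
      · exact main X hX h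
    rw [he]
    simp only [Finset.coe_image, Set.mem_image, Finset.mem_coe]
    refine ⟨Y.toFinset, ?_, by simp [F]⟩
    have hYA : Y.toFinset ⊆ A.toFinset := Set.toFinset_subset_toFinset.2 (hY.trans hX)
    rw [Set.ncard_eq_toFinset_card'] at hc
    simp only [P, Finset.mem_union, Finset.mem_powersetCard]
    have : Y.toFinset.card = 0 ∨ Y.toFinset.card = 1 ∨ Y.toFinset.card = 2 := by omega
    tauto
  calc (cutNbhdFamily G A).ncard ≤ ((P.image F : Finset (Set V)) : Set (Set V)).ncard :=
        Set.ncard_le_ncard hsub (Finset.finite_toSet _)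
    _ = (P.image F).card := Set.ncard_coe_finset _
    _ ≤ P.card := Finset.card_image_le
    _ ≤ (Finset.powersetCard 0 A.toFinset).card + (Finset.powersetCard 1 A.toFinset).card
        + (Finset.powersetCard 2 A.toFinset).card :=
        (Finset.card_union_le _ _).trans (Nat.add_le_add_right (Finset.card_union_le _ _) _)
    _ = _ := by
        rw [Finset.card_powersetCard, Finset.card_powersetCard, Finset.card_powersetCard,
          Set.ncard_eq_toFinset_card', Nat.choose_zero_right, Nat.choose_one_right,
          Nat.choose_two_right]
end

section
/- Let k ≥ 1 and let G be a finite simple graph admitting a k-trapezoid model: maps lᵢ, rᵢ : V(G) → ℝ for each i ∈ {1, …, k} with lᵢ(v) ≤ rᵢ(v) for all v and i, such that two distinct vertices u, v are adjacent if and only if neither (rᵢ(u) < lᵢ(v) for all i) nor (rᵢ(v) < lᵢ(u) for all i) holds. Then for every t ∈ ℝ, setting A = {v ∈ V(G) : maxᵢ rᵢ(v) < t}, every nonempty subset S ⊆ A has a subset S' ⊆ S with |S'| ≤ k and N(S) ∩ (V(G) ∖ A) = N(S') ∩ (V(G) ∖ A); consequently the cut-neighbourhood family of A has at most 1 + ∑_{i=1}^{k}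 C(|A|, i) elements. (This witnesses that every n-vertex k-trapezoid graph has boolean-width at most k·log₂ n.) -/
theorem ktrapezoid_graph_cut_nbhds {V : Type*} [Fintype V] (k : ℕ) (hk : 1 ≤ k)
    (G : SimpleGraph V)
    (l r : Fin k → V → ℝ) (hlr : ∀ i v, l i v ≤ r i v)
    (hmodel : ∀ u v : V, u ≠ v →
      (G.Adj u v ↔ ¬(∀ i, r i u < l i v) ∧ ¬(∀ i, r i v < l i u)))
    (t : ℝ) (A : Set V) (hA : A = {v | ∀ i, r i v < t}) :
    (∀ S : Set V, S ⊆ A → S.Nonempty →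
        ∃ S' ⊆ S, S'.ncard ≤ k ∧ nbhds G S ∩ Aᶜ = nbhds G S' ∩ Aᶜ) ∧
      (cutNbhdFamily G A).ncard ≤ 1 + ∑ i ∈ Finset.Icc 1 k, (A.ncard).choose i := by
  classical
  have hadj : ∀ u ∈ A, ∀ v ∈ Aᶜ, (G.Adj u v ↔ ∃ i, l i v ≤ r i u) := by
    intro u hu v hv
    have huv : u ≠ v := by
      rintro rfl
      exact hv hu
    rw [hmodel u v huv]
    subst hA
    simp only [Set.mem_compl_iff, Set.mem_ofPred_eq, not_forall, not_lt] at hu hv ⊢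
    obtain ⟨j, hj⟩ := hv
    constructor
    · exact fun h => h.1
    · exact fun h => ⟨h, j, ((hlr j u).trans (hu j).le).trans hj⟩
  have h1 : ∀ S : Set V, S ⊆ A → S.Nonempty →
      ∃ S' ⊆ S, S'.ncard ≤ k ∧ nbhds G S ∩ Aᶜ = nbhds G S' ∩ Aᶜ := by
    intro S hS hne
    have hmax : ∀ i : Fin k, ∃ m ∈ S, ∀ x ∈ S, r i x ≤ r i m := fun i =>
      Set.exists_max_image S (r i) S.toFinite hne
    choose m hm hmm using hmax
    have hsub : Set.range m ⊆ S := by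
      rintro _ ⟨i, rfl⟩
      exact hm i
    refine ⟨Set.range m, hsub, ?_, ?_⟩
    · rw [← Set.image_univ]
      refine (Set.ncard_image_le Set.finite_univ).trans ?_
      simp [Set.ncard_univ]
    · ext v
      constructor
      · rintro ⟨⟨x, hx, hxv⟩, hv⟩
        obtain ⟨i, hi⟩ := (hadj x (hS hx) v hv).1 hxv
        exact ⟨⟨m i, ⟨i, rfl⟩,
          (hadj _ (hS (hm i)) v hv).2 ⟨i, hi.trans (hmm i x hx)⟩⟩, hv⟩
      · rintro ⟨⟨x, hx, hxv⟩, hv⟩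
        exact ⟨⟨x, hsub hx, hxv⟩, hv⟩
  refine ⟨h1, ?_⟩
  let P : Finset (Finset V) :=
    (Finset.range (k + 1)).biUnion fun i => Finset.powersetCard i A.toFinset
  let F : Finset (Set V) := P.image fun X : Finset V => nbhds G (X : Set V) ∩ Aᶜ
  have hF : cutNbhdFamily G A ⊆ (F : Set (Set V)) := by
    rintro _ ⟨X, hX, rfl⟩
    have key : ∃ S' ⊆ X, S'.ncard ≤ k ∧ nbhds G X ∩ Aᶜ = nbhds G S' ∩ Aᶜ := by
      rcases X.eq_empty_or_nonempty with rfl | hne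
      · exact ⟨∅, subset_rfl, by simp, rfl⟩
      · exact h1 X hX hne
    obtain ⟨S', hS', hc, he⟩ := key
    rw [Finset.mem_coe, Finset.mem_image]
    refine ⟨S'.toFinset, ?_, ?_⟩
    · rw [Finset.mem_biUnion]
      refine ⟨S'.ncard, Finset.mem_range.2 (by omega), ?_⟩
      rw [Finset.mem_powersetCard]
      exact ⟨Set.toFinset_subset_toFinset.2 (hS'.trans hX),
        (Set.ncard_eq_toFinset_card' S').symm⟩
    · simp only [Set.coe_toFinset]
      exact he.symm
  calc (cutNbhdFamily G A).ncard ≤ (F : Set (Set V)).ncard :=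
        Set.ncard_le_ncard hF F.finite_toSet
    _ = F.card := Set.ncard_coe_finset F
    _ ≤ P.card := Finset.card_image_le
    _ ≤ ∑ i ∈ Finset.range (k + 1), (Finset.powersetCard i A.toFinset).card :=
        Finset.card_biUnion_le
    _ = ∑ i ∈ Finset.range (k + 1), (A.ncard).choose i := by
        simp only [Finset.card_powersetCard, Set.ncard_eq_toFinset_card' A]
    _ = 1 + ∑ i ∈ Finset.Icc 1 k, (A.ncard).choose i := by
        rw [Finset.range_eq_Ico, Finset.sum_eq_sum_Ico_succ_bot (Nat.succ_pos k)]
        simp only [Nat.choose_zero_right]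
        rfl
end

section
/- Let G be a finite simple graph with nonempty vertex set admitting a circular arc model: maps s, e : V(G) → [0, 1), where the arc of v is the image in ℝ/ℤ of the real interval [s(v), ẽ(v)] with ẽ(v) = e(v) if s(v) ≤ e(v) and ẽ(v) = e(v) + 1 otherwise, and two distinct vertices u, v are adjacent if and only if the arcs of u and v have a common point in ℝ/ℤ. Then for every t ∈ [0, 1), setting A = {v ∈ V(G) : s(v) < t}: (i) every nonempty subset S ⊆ A has a subset S' ⊆ S with |S'| ≤ 2 and N(S) ∩ (V(G) ∖ A) = N(S') ∩ (V(G) ∖ A); and (ii) the cut-neighbourhood family of A has at most 4·ω(G)² elements, where ω(G) is the clique number of G. (This witnesses that every circular arc graph has boolean-width at most 2 log₂ ω(G) + 2.) -/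
/-- The circular arc of a vertex: the image in `ℝ/ℤ` of the interval from `s v` to
`e v` (clockwise, wrapping around `0` when `s v > e v`). -/
noncomputable def circArc {V : Type*} (s e : V → ℝ) (v : V) : Set (AddCircle (1 : ℝ)) :=
  (fun x : ℝ => (x : AddCircle (1 : ℝ))) ''
    Set.Icc (s v) (if s v ≤ e v then e v else e v + 1)

/-- The unwrapped end point of the arc of a vertex. -/
noncomputable def arcEnd {V : Type*} (s e : V → ℝ) (v : V) : ℝ :=
  if s v ≤ e v then e v else e v + 1

theorem arcEnd_bounds {V : Type*} (s e : V → ℝ) (hs : ∀ v, s v ∈ Set.Ico (0 : ℝ) 1)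
    (he : ∀ v, e v ∈ Set.Ico (0 : ℝ) 1) (v : V) :
    s v ≤ arcEnd s e v ∧ arcEnd s e v < s v + 1 := by
  have h1 := hs v
  have h2 := he v
  simp only [Set.mem_Ico] at h1 h2
  unfold arcEnd
  split_ifs <;> constructor <;> linarith

theorem circArc_inter_iff {V : Type*} (s e : V → ℝ) (hs : ∀ v, s v ∈ Set.Ico (0 : ℝ) 1)
    (he : ∀ v, e v ∈ Set.Ico (0 : ℝ) 1) (u v : V) (huv : s u < s v) :
    (circArc s e u ∩ circArc s e v).Nonempty ↔
      s v ≤ arcEnd s e u ∨ s u + 1 ≤ arcEnd s e v := by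
  have bu := arcEnd_bounds s e hs he u
  have bv := arcEnd_bounds s e hs he v
  have su := hs u
  have sv := hs v
  simp only [Set.mem_Ico] at su sv
  constructor
  · rintro ⟨z, ⟨x, hx, rfl⟩, ⟨y, hy, hxy⟩⟩
    change x ∈ Set.Icc (s u) (arcEnd s e u) at hx
    change y ∈ Set.Icc (s v) (arcEnd s e v) at hy
    obtain ⟨hx1, hx2⟩ := hx
    obtain ⟨hy1, hy2⟩ := hy
    have hz : ((y - x : ℝ) : AddCircle (1 : ℝ)) = 0 := by
      rw [AddCircle.coe_sub]; exact sub_eq_zero.mpr hxy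
    obtain ⟨k, hk⟩ := (AddCircle.coe_eq_zero_iff (1 : ℝ)).mp hz
    simp only [zsmul_eq_mul, mul_one] at hk
    rcases le_or_gt k 0 with h | h
    · left
      have : (k : ℝ) ≤ 0 := by exact_mod_cast h
      linarith
    · right
      have : (1 : ℝ) ≤ k := by exact_mod_cast h
      linarith
  · rintro (h | h)
    · exact ⟨(s v : ℝ), ⟨s v, ⟨huv.le, h⟩, rfl⟩, ⟨s v, ⟨le_rfl, bv.1⟩, rfl⟩⟩
    · refine ⟨(s u : ℝ), ⟨s u, ⟨le_rfl, bu.1⟩, rfl⟩, ⟨s u + 1, ⟨by linarith, h⟩, ?_⟩⟩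
      exact AddCircle.coe_add_period 1 (s u)

theorem clique_ncard_le {V : Type*} [Fintype V] (G : SimpleGraph V) (C : Set V)
    (hC : G.IsClique C) : C.ncard ≤ G.cliqueNum := by
  classical
  rw [Set.ncard_eq_toFinset_card']
  apply SimpleGraph.IsClique.card_le_cliqueNum
  simpa using hC

theorem circular_arc_graph_cut_nbhds {V : Type*} [Fintype V] [Nonempty V] (G : SimpleGraph V)
    (s e : V → ℝ) (hs : ∀ v, s v ∈ Set.Ico (0 : ℝ) 1) (he : ∀ v, e v ∈ Set.Ico (0 : ℝ) 1)
    (hmodel : ∀ u v : V, u ≠ v → (G.Adj u v ↔ (circArc s e u ∩ circArc s e v).Nonempty))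
    (t : ℝ) (ht : t ∈ Set.Ico (0 : ℝ) 1) (A : Set V) (hA : A = {v | s v < t}) :
    (∀ S : Set V, S ⊆ A → S.Nonempty →
        ∃ S' ⊆ S, S'.ncard ≤ 2 ∧ nbhds G S ∩ Aᶜ = nbhds G S' ∩ Aᶜ) ∧
      (cutNbhdFamily G A).ncard ≤ 4 * G.cliqueNum ^ 2 := by
  classical
  set E : V → ℝ := arcEnd s e with hE
  have memA : ∀ v, v ∈ A ↔ s v < t := fun v => by rw [hA]; rfl
  have hadj : ∀ u v, u ∈ A → v ∉ A → (G.Adj u v ↔ (s v ≤ E u ∨ s u + 1 ≤ E v)) := by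
    intro u v hu hv
    have hlt : s u < s v := lt_of_lt_of_le ((memA u).1 hu) (not_lt.1 (fun h => hv ((memA v).2 h)))
    have hne : u ≠ v := by rintro rfl; exact lt_irrefl _ hlt
    rw [hmodel u v hne, circArc_inter_iff s e hs he u v hlt]
  have key : ∀ S : Set V, S ⊆ A → S.Nonempty → ∃ a ∈ S, ∃ b ∈ S, (∀ x ∈ S, E x ≤ E a) ∧
      (∀ x ∈ S, s b ≤ s x) := by
    intro S _ hne
    obtain ⟨a, ha, ha'⟩ := Set.exists_max_image S E (Set.toFinite S) hne
    obtain ⟨b, hb, hb'⟩ := Set.exists_min_image S s (Set.toFinite S) hne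
    exact ⟨a, ha, b, hb, ha', hb'⟩
  have hN : ∀ S : Set V, S ⊆ A → ∀ a ∈ S, ∀ b ∈ S, (∀ x ∈ S, E x ≤ E a) →
      (∀ x ∈ S, s b ≤ s x) →
      nbhds G S ∩ Aᶜ = {v | v ∉ A ∧ s v ≤ E a} ∪ {v | v ∉ A ∧ s b + 1 ≤ E v} := by
    intro S hSA a ha b hb ha' hb'
    ext v
    constructor
    · rintro ⟨⟨x, hx, hxv⟩, hv⟩
      rcases (hadj x v (hSA hx) hv).1 hxv with h | h
      · exact Or.inl ⟨hv, h.trans (ha' x hx)⟩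
      · exact Or.inr ⟨hv, by linarith [hb' x hx]⟩
    · rintro (⟨hv, h⟩ | ⟨hv, h⟩)
      · exact ⟨⟨a, ha, (hadj a v (hSA ha) hv).2 (Or.inl h)⟩, hv⟩
      · exact ⟨⟨b, hb, (hadj b v (hSA hb) hv).2 (Or.inr h)⟩, hv⟩
  refine ⟨?_, ?_⟩
  · intro S hSA hne
    obtain ⟨a, ha, b, hb, ha', hb'⟩ := key S hSA hne
    have hsub : ({a, b} : Set V) ⊆ S := by
      rintro x (rfl | rfl) <;> assumption
    refine ⟨{a, b}, hsub, (Set.ncard_insert_le _ _).trans (by simp), ?_⟩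
    rw [hN S hSA a ha b hb ha' hb', hN {a, b} (hsub.trans hSA) a (by simp) b (by simp)
      (fun x hx => ha' x (hsub hx)) (fun x hx => hb' x (hsub hx))]
  · set C₁ : Set V := {u | u ∈ A ∧ t ≤ E u} with hC₁
    set C₂ : Set V := {v | v ∉ A ∧ 1 ≤ E v} with hC₂
    have c1 : C₁.ncard ≤ G.cliqueNum := by
      apply clique_ncard_le
      rintro u ⟨hu, hu'⟩ v ⟨hv, hv'⟩ hne
      exact (hmodel u v hne).2 ⟨(t : ℝ), ⟨t, ⟨((memA u).1 hu).le, hu'⟩, rfl⟩,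
        ⟨t, ⟨((memA v).1 hv).le, hv'⟩, rfl⟩⟩
    have c2 : C₂.ncard ≤ G.cliqueNum := by
      apply clique_ncard_le
      rintro u ⟨hu, hu'⟩ v ⟨hv, hv'⟩ hne
      exact (hmodel u v hne).2 ⟨((1 : ℝ) : AddCircle (1 : ℝ)), ⟨1, ⟨(hs u).2.le, hu'⟩, rfl⟩,
        ⟨1, ⟨(hs v).2.le, hv'⟩, rfl⟩⟩
    have c0 : 1 ≤ G.cliqueNum := by
      have x : V := Classical.arbitrary V
      have := clique_ncard_le G {x} (by simp)
      simpa using this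
    set F₁ : Set (Set V) := insert ∅ ((fun u => {v | v ∉ A ∧ s v ≤ E u}) '' C₁) with hF₁
    set F₂ : Set (Set V) := insert ∅ ((fun w => {v | v ∉ A ∧ E w ≤ E v}) '' C₂) with hF₂
    have f1 : F₁.ncard ≤ G.cliqueNum + 1 :=
      (Set.ncard_insert_le _ _).trans
        (Nat.add_le_add_right ((Set.ncard_image_le (Set.toFinite _)).trans c1) 1)
    have f2 : F₂.ncard ≤ G.cliqueNum + 1 :=
      (Set.ncard_insert_le _ _).trans
        (Nat.add_le_add_right ((Set.ncard_image_le (Set.toFinite _)).trans c2) 1)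
    have hsub : cutNbhdFamily G A ⊆ (fun p : Set V × Set V => p.1 ∪ p.2) '' (F₁ ×ˢ F₂) := by
      rintro T ⟨X, hXA, rfl⟩
      rcases X.eq_empty_or_nonempty with rfl | hne
      · refine ⟨(∅, ∅), ⟨Set.mem_insert _ _, Set.mem_insert _ _⟩, ?_⟩
        ext v
        simp [nbhds]
      · obtain ⟨a, ha, b, hb, ha', hb'⟩ := key X hXA hne
        rw [hN X hXA a ha b hb ha' hb']
        refine ⟨({v | v ∉ A ∧ s v ≤ E a}, {v | v ∉ A ∧ s b + 1 ≤ E v}), ⟨?_, ?_⟩, rfl⟩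
        · by_cases h : t ≤ E a
          · exact Set.mem_insert_of_mem _ ⟨a, ⟨hXA ha, h⟩, rfl⟩
          · have : {v | v ∉ A ∧ s v ≤ E a} = (∅ : Set V) := by
              ext v
              simp only [Set.mem_ofPred_eq, Set.mem_empty_iff_false, iff_false, not_and, memA]
              intro h1 h2
              linarith
            change {v | v ∉ A ∧ s v ≤ E a} ∈ F₁
            rw [this]
            exact Set.mem_insert _ _
        · rcases Set.eq_empty_or_nonempty {v | v ∉ A ∧ s b + 1 ≤ E v} with h | h
          · change {v | v ∉ A ∧ s b + 1 ≤ E v} ∈ F₂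
            rw [h]
            exact Set.mem_insert _ _
          · obtain ⟨w, hw, hw'⟩ := Set.exists_min_image _ E (Set.toFinite _) h
            refine Set.mem_insert_of_mem _ ⟨w, ⟨hw.1, ?_⟩, ?_⟩
            · linarith [hw.2, (hs b).1]
            · ext v
              exact ⟨fun hv => ⟨hv.1, hw.2.trans hv.2⟩, fun hv => ⟨hv.1, hw' v hv⟩⟩
    calc (cutNbhdFamily G A).ncard
        ≤ ((fun p : Set V × Set V => p.1 ∪ p.2) '' (F₁ ×ˢ F₂)).ncard :=
          Set.ncard_le_ncard hsub (Set.toFinite _)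
      _ ≤ (F₁ ×ˢ F₂).ncard := Set.ncard_image_le (Set.toFinite _)
      _ = F₁.ncard * F₂.ncard := Set.ncard_prod
      _ ≤ (G.cliqueNum + 1) * (G.cliqueNum + 1) := Nat.mul_le_mul f1 f2
      _ ≤ 4 * G.cliqueNum ^ 2 := by nlinarith
end

section
/- Let G be a finite simple bipartite graph with a bipartition V(G) = X ∪ Y (X and Y disjoint, every edge joining X and Y) that is convex: there is a linear order ≤ on X such that for every y ∈ Y, the neighbourhood N(y) is an interval in (X, ≤), i.e. whenever x₁ ≤ x₂ ≤ x₃ with x₁, x₃ ∈ N(y) then x₂ ∈ N(y). Then there exists a linear order σ on V(G) such that for every initial segment A of σ, every nonempty subset S ⊆ A has a subset R ⊆ S with |R| ≤ 1 and N(S) ∩ (V(G) ∖ A) = N(R) ∩ (V(G) ∖ A); consequently the cut-neighbourhood family of each initial segment A has at most |A| + 1 ≤ |V(G)| elements. (This witnesses that every n-vertex convex graph has boolean-width at most log₂ n.) -/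
theorem convex_graph_cut_nbhds {V : Type*} [Fintype V] (G : SimpleGraph V)
    (X Y : Set V) (hcover : X ∪ Y = Set.univ) (hdisj : Disjoint X Y)
    (hbip : ∀ u v : V, G.Adj u v → (u ∈ X ∧ v ∈ Y) ∨ (u ∈ Y ∧ v ∈ X))
    (lo : LinearOrder X)
    (hconvex : ∀ y ∈ Y, ∀ x₁ x₂ x₃ : X, lo.le x₁ x₂ → lo.le x₂ x₃ →
      G.Adj (x₁ : V) y → G.Adj (x₃ : V) y → G.Adj (x₂ : V) y) :
    ∃ σ : LinearOrder V, ∀ A : Set V, (∀ a ∈ A, ∀ b : V, σ.le b a → b ∈ A) →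
      ((∀ S : Set V, S ⊆ A → S.Nonempty →
          ∃ R ⊆ S, R.ncard ≤ 1 ∧ nbhds G S ∩ Aᶜ = nbhds G R ∩ Aᶜ) ∧
        (cutNbhdFamily G A).ncard ≤ A.ncard + 1) := by
  classical
  have hnot : ∀ v, v ∈ X → v ∈ Y → False := fun v h1 h2 => Set.disjoint_left.mp hdisj h1 h2
  -- rank of the vertices of X
  obtain ⟨r, hr⟩ : ∃ r : X → ℕ, ∀ a b : X, a < b → r a < r b := by
    refine ⟨fun a => (Finset.univ.filter (fun c : X => c < a)).card, fun a b hab => ?_⟩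
    apply Finset.card_lt_card
    rw [Finset.ssubset_iff_of_subset]
    · exact ⟨a, by simpa using hab, by simp⟩
    · intro c hc
      simp only [Finset.mem_filter, Finset.mem_univ, true_and] at hc ⊢
      exact hc.trans hab
  let k : V → ℕ := fun v => if h : v ∈ X then 2 * r ⟨v, h⟩ + 1 else
    Finset.univ.sup (fun x : X => if G.Adj (x : V) v then 2 * r x + 2 else 0)
  have kX : ∀ x : X, k x = 2 * r x + 1 := fun x => by simp [k]
  have kY : ∀ y ∈ Y, k y =
      Finset.univ.sup (fun x : X => if G.Adj (x : V) y then 2 * r x + 2 else 0) := by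
    intro y hy
    have : y ∉ X := fun h => hnot y h hy
    simp [k, this]
  let e := Fintype.equivFin V
  let f : V → ℕ ×ₗ Fin (Fintype.card V) := fun v => toLex (k v, e v)
  have hf : Function.Injective f := by
    intro a b hab
    have h2 := congrArg (fun p => (ofLex p).2) hab
    exact e.injective h2
  refine ⟨LinearOrder.lift' f hf, fun A hA => ?_⟩
  have hA' : ∀ a ∈ A, ∀ b, k b < k a → b ∈ A := by
    intro a ha b hb
    apply hA a ha b
    change f b ≤ f a
    exact Prod.Lex.le_iff.mpr (Or.inl hb)
  have claim1 : ∀ y ∈ Y, y ∈ A → ∀ v, G.Adj y v → v ∈ A := by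
    intro y hy hyA v hv
    have hvX : v ∈ X := by
      rcases hbip _ _ hv with h | h
      · exact (hnot y h.1 hy).elim
      · exact h.2
    apply hA' y hyA
    have h1 := kX ⟨v, hvX⟩
    have h2 := Finset.le_sup (f := fun x : X => if G.Adj (x : V) y then 2 * r x + 2 else 0)
      (Finset.mem_univ (⟨v, hvX⟩ : X))
    rw [← kY y hy] at h2
    simp only [hv.symm, if_true] at h2
    simp only at h1
    omega
  have claim2 : ∀ x₁ x₂ : X, x₁ ≤ x₂ → (x₂ : V) ∈ A → ∀ y, y ∉ A → G.Adj (x₁ : V) y →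
      G.Adj (x₂ : V) y := by
    intro x₁ x₂ h12 hx2 y hyA hadj
    have hy : y ∈ Y := by
      rcases hbip _ _ hadj with h | h
      · exact h.2
      · exact (hnot _ x₁.2 h.1).elim
    by_cases h : ∃ x₃ : X, x₂ ≤ x₃ ∧ G.Adj (x₃ : V) y
    · obtain ⟨x₃, h3, h3'⟩ := h
      exact hconvex y hy x₁ x₂ x₃ h12 h3 hadj h3'
    · exfalso
      apply hyA
      apply hA' _ hx2
      rw [kX, kY y hy]
      refine Nat.lt_succ_of_le (Finset.sup_le fun x _ => ?_)
      split_ifs with hx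
      · have : x < x₂ := lt_of_not_ge fun hh => h ⟨x, hh, hx⟩
        have := hr _ _ this
        omega
      · exact Nat.zero_le _
  have main : ∀ S : Set V, S ⊆ A → nbhds G S ∩ Aᶜ = ∅ ∨
      ∃ a ∈ S, nbhds G S ∩ Aᶜ = nbhds G {a} ∩ Aᶜ := by
    intro S hS
    by_cases hne : ∃ x : X, (x : V) ∈ S
    · right
      obtain ⟨m, hm, hmax⟩ := Finset.exists_max_image
        (Finset.univ.filter (fun x : X => (x : V) ∈ S)) id
        (by obtain ⟨x, hx⟩ := hne; exact ⟨x, by simpa using hx⟩)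
      simp only [Finset.mem_filter, Finset.mem_univ, true_and, id] at hm hmax
      refine ⟨m, hm, ?_⟩
      ext v
      constructor
      · rintro ⟨⟨s, hs, hadj⟩, hv⟩
        refine ⟨⟨m, rfl, ?_⟩, hv⟩
        rcases hbip _ _ hadj with h | h
        · exact claim2 ⟨s, h.1⟩ m (hmax ⟨s, h.1⟩ hs) (hS hm) v hv hadj
        · exact (hv (claim1 s h.1 (hS hs) v hadj)).elim
      · rintro ⟨⟨s, hs, hadj⟩, hv⟩
        rw [Set.mem_singleton_iff] at hs
        subst hs
        exact ⟨⟨m, hm, hadj⟩, hv⟩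
    · left
      rw [Set.eq_empty_iff_forall_notMem]
      rintro v ⟨⟨s, hs, hadj⟩, hv⟩
      rcases hbip _ _ hadj with h | h
      · exact hne ⟨⟨s, h.1⟩, hs⟩
      · exact hv (claim1 s h.1 (hS hs) v hadj)
  constructor
  · intro S hS _
    rcases main S hS with h | ⟨a, ha, h⟩
    · refine ⟨∅, Set.empty_subset _, by simp, ?_⟩
      rw [h]
      ext v
      simp [nbhds]
    · exact ⟨{a}, by simpa using ha, by simp, h⟩
  · have hsub : cutNbhdFamily G A ⊆ insert ∅ ((fun a => nbhds G {a} ∩ Aᶜ) '' A) := by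
      rintro T ⟨S, hS, rfl⟩
      rcases main S hS with h | ⟨a, ha, h⟩
      · exact Or.inl h
      · exact Or.inr ⟨a, hS ha, h.symm⟩
    calc (cutNbhdFamily G A).ncard
        ≤ (insert ∅ ((fun a => nbhds G {a} ∩ Aᶜ) '' A)).ncard :=
          Set.ncard_le_ncard hsub (Set.toFinite _)
      _ ≤ ((fun a => nbhds G {a} ∩ Aᶜ) '' A).ncard + 1 := Set.ncard_insert_le _ _
      _ ≤ A.ncard + 1 := Nat.add_le_add_right (Set.ncard_image_le (Set.toFinite A)) 1
end

section
/- Let G be a finite simple graph and k ≥ 1. Call two vertices u, v comparable if N(u) ⊆ N[v] or N(v) ⊆ N[u], where N[w] = N(w) ∪ {w} is the closed neighbourhood. Suppose G has Dilworth number at most k, i.e. every set of pairwise incomparable vertices has at most k elements. Then for every A ⊆ V(G) and every S ⊆ A there exists X ⊆ S with |X| ≤ k and N(S) ∩ (V(G) ∖ A) = N(X) ∩ (V(G) ∖ A); consequently, for every A ⊆ V(G) the cut-neighbourhood family of A has at most ∑_{i=0}^{k} C(n, i) elements, where n = |V(G)|. (This witnesses that every n-vertex Dilworth-k graph has boolean-width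 at most k·log₂ n.) -/
/-- `u` and `v` are comparable if `N(u) ⊆ N[v]` or `N(v) ⊆ N[u]`. -/
def NbhdComparable {V : Type*} (G : SimpleGraph V) (u v : V) : Prop :=
  G.neighborSet u ⊆ insert v (G.neighborSet v) ∨ G.neighborSet v ⊆ insert u (G.neighborSet u)

theorem dilworth_graph_cut_nbhds {V : Type*} [Fintype V] (G : SimpleGraph V) (k : ℕ)
    (hk : 1 ≤ k)
    (hDil : ∀ S : Set V,
      (∀ u ∈ S, ∀ v ∈ S, u ≠ v → ¬ NbhdComparable G u v) → S.ncard ≤ k) :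
    (∀ A S : Set V, S ⊆ A →
        ∃ X ⊆ S, X.ncard ≤ k ∧ nbhds G S ∩ Aᶜ = nbhds G X ∩ Aᶜ) ∧
      ∀ A : Set V, (cutNbhdFamily G A).ncard ≤
        ∑ i ∈ Finset.range (k + 1), (Fintype.card V).choose i := by
  classical
  have key : ∀ A S : Set V, S ⊆ A →
      ∃ X ⊆ S, X.ncard ≤ k ∧ nbhds G S ∩ Aᶜ = nbhds G X ∩ Aᶜ := by
    intro A S hSA
    obtain ⟨X, hX⟩ := (Set.toFinite {X : Set V | X ⊆ S ∧
      nbhds G S ∩ Aᶜ = nbhds G X ∩ Aᶜ}).exists_minimal ⟨S, subset_rfl, rfl⟩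
    have hXS : X ⊆ S := hX.prop.1
    have hXN := hX.prop.2
    have aux : ∀ u ∈ X, ∀ v ∈ X, u ≠ v →
        ¬ G.neighborSet u ⊆ insert v (G.neighborSet v) := by
      intro u hu v hv huv hsub
      have hmem : X \ {u} ∈ {X : Set V | X ⊆ S ∧ nbhds G S ∩ Aᶜ = nbhds G X ∩ Aᶜ} := by
        refine ⟨fun x hx => hXS hx.1, ?_⟩
        rw [hXN]
        ext w
        constructor
        · rintro ⟨⟨x, hx, hxw⟩, hwA⟩
          refine ⟨?_, hwA⟩
          by_cases hxu : x = u
          · subst hxu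
            rcases hsub hxw with h | h
            · exact absurd (h ▸ hSA (hXS hv)) hwA
            · exact ⟨v, ⟨hv, fun h' => huv h'.symm⟩, h⟩
          · exact ⟨x, ⟨hx, hxu⟩, hxw⟩
        · rintro ⟨⟨x, hx, hxw⟩, hwA⟩
          exact ⟨⟨x, hx.1, hxw⟩, hwA⟩
      exact (hX.le_of_le hmem (fun x hx => hx.1) hu).2 rfl
    refine ⟨X, hXS, hDil X ?_, hXN⟩
    rintro u hu v hv huv (h | h)
    · exact aux u hu v hv huv h
    · exact aux v hv u hu huv.symm h
  refine ⟨key, fun A => ?_⟩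
  let F : Finset (Finset V) :=
    (Finset.range (k + 1)).biUnion fun i => Finset.powersetCard i Finset.univ
  have hsub : cutNbhdFamily G A ⊆
      ((F.image fun X : Finset V => nbhds G (X : Set V) ∩ Aᶜ : Finset (Set V)) :
        Set (Set V)) := by
    rintro T ⟨S, hSA, rfl⟩
    obtain ⟨X, -, hXk, hXN⟩ := key A S hSA
    rw [hXN]
    simp only [Finset.coe_image, Set.mem_image, Finset.mem_coe]
    refine ⟨X.toFinset, ?_, by simp⟩
    simp only [F, Finset.mem_biUnion, Finset.mem_range, Finset.mem_powersetCard]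
    refine ⟨X.ncard, by omega, Finset.subset_univ _, ?_⟩
    rw [Set.ncard_eq_toFinset_card']
  calc (cutNbhdFamily G A).ncard ≤ _ := Set.ncard_le_ncard hsub (Finset.finite_toSet _)
    _ = _ := Set.ncard_coe_finset _
    _ ≤ F.card := Finset.card_image_le
    _ ≤ _ := Finset.card_biUnion_le
    _ = _ := by simp [Finset.card_powersetCard]
end

section
/- Let G be a finite simple graph on n vertices and k ≥ 0, and suppose there is a linear order ≤ on V(G) such that every vertex v has at most k non-neighbours strictly greater than v (i.e. |{w ∈ V(G) : v < w and w ∉ N(v)}| ≤ k for all v); equivalently, the complement of G is k-degenerate with this elimination ordering. Then for every initial segment A of the order ≤, the cut-neighbourhood family of A has at most 1 + ∑_{i=0}^{k} C(n, i) elements. (This witnesses that the complement of every n-vertex k-degenerate graph has boolean-width at most k·log₂ n + O(1).) -/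
theorem complement_degenerate_cut_nbhds {V : Type*} [Fintype V] [LinearOrder V]
    (G : SimpleGraph V) (k : ℕ)
    (hdeg : ∀ v : V, ({w : V | v < w ∧ ¬ G.Adj v w}).ncard ≤ k)
    (A : Set V) (hinit : ∀ a ∈ A, ∀ b : V, b ≤ a → b ∈ A) :
    (cutNbhdFamily G A).ncard ≤
      1 + ∑ i ∈ Finset.range (k + 1), (Fintype.card V).choose i := by
  classical
  let P : Finset (Finset V) :=
    (Finset.range (k + 1)).biUnion (fun i => Finset.powersetCard i Finset.univ)
  let F : Finset (Set V) :=
    insert ∅ (P.image (fun T : Finset V => Aᶜ \ (T : Set V)))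
  have hsub : cutNbhdFamily G A ⊆ (F : Set (Set V)) := by
    rintro S ⟨X, hXA, rfl⟩
    rcases X.eq_empty_or_nonempty with rfl | ⟨x, hx⟩
    · have h0 : nbhds G (∅ : Set V) ∩ Aᶜ = ∅ := by
        ext v
        simp [nbhds]
      rw [h0]
      simp [F]
    · refine Finset.mem_coe.2 (Finset.mem_insert_of_mem (Finset.mem_image.2
        ⟨(Aᶜ \ nbhds G X).toFinset, ?_, ?_⟩))
      · refine Finset.mem_biUnion.2 ⟨(Aᶜ \ nbhds G X).toFinset.card, ?_, ?_⟩
        · rw [Finset.mem_range, Nat.lt_succ_iff, ← Set.ncard_eq_toFinset_card']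
          refine le_trans (Set.ncard_le_ncard ?_ (Set.toFinite _)) (hdeg x)
          rintro w ⟨hwA, hw⟩
          refine ⟨?_, fun h => hw ⟨x, hx, h⟩⟩
          by_contra hlt
          exact hwA (hinit x (hXA hx) w (not_lt.1 hlt))
        · simp [Finset.mem_powersetCard]
      · ext v
        simp only [Set.coe_toFinset, Set.mem_diff, Set.mem_inter_iff]
        tauto
  calc (cutNbhdFamily G A).ncard ≤ (F : Set (Set V)).ncard :=
        Set.ncard_le_ncard hsub (Finset.finite_toSet F)
    _ = F.card := Set.ncard_coe_finset F
    _ ≤ P.card + 1 := (Finset.card_insert_le _ _).trans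
        (Nat.add_le_add_right Finset.card_image_le 1)
    _ ≤ (∑ i ∈ Finset.range (k + 1), (Fintype.card V).choose i) + 1 := by
        refine Nat.add_le_add_right (Finset.card_biUnion_le.trans (le_of_eq ?_)) 1
        refine Finset.sum_congr rfl fun i _ => ?_
        rw [Finset.card_powersetCard, Finset.card_univ]
    _ = _ := Nat.add_comm _ _
end

section
/- Let p, q ≥ 1 and let G be the Hsu-Stable-chain: the simple graph on vertex set Fin q × Fin p in which (i, j) and (i', j') are adjacent if and only if (i' = i + 1 and j ≤ j') or (i = i' + 1 and j' ≤ j). Order the vertices lexicographically: (i, j) ≤ (i', j') iff i < i' or (i = i' and j ≤ j'). Then for every initial segment A of this order, every nonempty subset X ⊆ A has a subset R ⊆ X with |R| ≤ 2 and N(X) ∩ (V(G) ∖ A) = N(R) ∩ (V(G) ∖ A); consequently the cut-neighbourhood family of A has at most 1 + |A| + |A|(|A|−1)/2 elements. (This witnesses that the Hsu-Stable-chain of length q and width p has boolean-width O(log p) when q is polynomial in p.) -/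
/-- Lexicographic order on `Fin q × Fin p`. -/
def lexLe {q p : ℕ} (u v : Fin q × Fin p) : Prop :=
  (u.1 : ℕ) < (v.1 : ℕ) ∨ (u.1 = v.1 ∧ (u.2 : ℕ) ≤ (v.2 : ℕ))

theorem row_min {q p : ℕ} (X : Set (Fin q × Fin p)) (n : ℕ) :
    ∃ R ⊆ X, R.ncard ≤ 1 ∧ ∀ x ∈ X, (x.1 : ℕ) = n →
      ∃ r ∈ R, (r.1 : ℕ) = n ∧ (r.2 : ℕ) ≤ (x.2 : ℕ) := by
  by_cases h : ({x ∈ X | (x.1 : ℕ) = n}).Nonempty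
  · obtain ⟨r, hr, hmin⟩ := Set.exists_min_image {x ∈ X | (x.1 : ℕ) = n}
      (fun x => (x.2 : ℕ)) (Set.toFinite _) h
    refine ⟨{r}, by simpa using hr.1, by simp, fun x hx hn => ⟨r, rfl, hr.2, hmin x ⟨hx, hn⟩⟩⟩
  · refine ⟨∅, by simp, by simp, fun x hx hn => (h ⟨x, hx, hn⟩).elim⟩

theorem hsu_stable_chain_cut_nbhds (p q : ℕ) (hp : 1 ≤ p) (hq : 1 ≤ q)
    (G : SimpleGraph (Fin q × Fin p))
    (hG : ∀ u v : Fin q × Fin p, G.Adj u v ↔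
      ((u.1 : ℕ) + 1 = (v.1 : ℕ) ∧ (u.2 : ℕ) ≤ (v.2 : ℕ)) ∨
      ((v.1 : ℕ) + 1 = (u.1 : ℕ) ∧ (v.2 : ℕ) ≤ (u.2 : ℕ)))
    (A : Set (Fin q × Fin p)) (hinit : ∀ v ∈ A, ∀ u, lexLe u v → u ∈ A) :
    (∀ X : Set (Fin q × Fin p), X ⊆ A → X.Nonempty →
        ∃ R ⊆ X, R.ncard ≤ 2 ∧ nbhds G X ∩ Aᶜ = nbhds G R ∩ Aᶜ) ∧
      (cutNbhdFamily G A).ncard ≤ 1 + A.ncard + A.ncard * (A.ncard - 1) / 2 := by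
  have part1 : ∀ X : Set (Fin q × Fin p), X ⊆ A → X.Nonempty →
        ∃ R ⊆ X, R.ncard ≤ 2 ∧ nbhds G X ∩ Aᶜ = nbhds G R ∩ Aᶜ := by
    intro X hXA hX
    obtain ⟨a, ha, hmax⟩ := Set.exists_max_image A (fun x => (x.1 : ℕ)) (Set.toFinite _)
      (hX.mono hXA)
    obtain ⟨R, hR, hRc, hRm⟩ := row_min X (a.1 : ℕ)
    obtain ⟨S, hS, hSc, hSm⟩ := row_min X ((a.1 : ℕ) - 1)
    refine ⟨R ∪ S, Set.union_subset hR hS, (Set.ncard_union_le R S).trans (by omega), ?_⟩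
    ext v
    constructor
    · rintro ⟨⟨x, hx, hadj⟩, hv⟩
      refine ⟨?_, hv⟩
      rw [hG] at hadj
      rcases hadj with ⟨h1, h2⟩ | ⟨h1, h2⟩
      · have hxm := hmax x (hXA hx)
        have hva : ¬ ((v.1 : ℕ) < (a.1 : ℕ)) := fun h => hv (hinit a ha v (Or.inl h))
        by_cases hxa : (x.1 : ℕ) = (a.1 : ℕ)
        · obtain ⟨r, hr, hr1, hr2⟩ := hRm x hx hxa
          exact ⟨r, Or.inl hr, (hG r v).2 (Or.inl ⟨by omega, by omega⟩)⟩
        · obtain ⟨r, hr, hr1, hr2⟩ := hSm x hx (by omega)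
          exact ⟨r, Or.inr hr, (hG r v).2 (Or.inl ⟨by omega, by omega⟩)⟩
      · exact (hv (hinit x (hXA hx) v (Or.inl (by omega)))).elim
    · rintro ⟨⟨x, hx, hadj⟩, hv⟩
      exact ⟨⟨x, Set.union_subset hR hS hx, hadj⟩, hv⟩
  refine ⟨part1, ?_⟩
  classical
  let F : Finset (Fin q × Fin p) := A.toFinite.toFinset
  have hF : A.ncard = F.card := Set.ncard_eq_toFinset_card A _
  let P : Finset (Finset (Fin q × Fin p)) :=
    F.powersetCard 0 ∪ F.powersetCard 1 ∪ F.powersetCard 2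
  have hP : P.card ≤ 1 + A.ncard + A.ncard * (A.ncard - 1) / 2 := by
    have h1 := Finset.card_union_le (F.powersetCard 0 ∪ F.powersetCard 1) (F.powersetCard 2)
    have h2 := Finset.card_union_le (F.powersetCard 0) (F.powersetCard 1)
    rw [Finset.card_powersetCard] at h1
    rw [Finset.card_powersetCard, Finset.card_powersetCard, Nat.choose_zero_right,
      Nat.choose_one_right] at h2
    rw [hF, ← Nat.choose_two_right]
    exact h1.trans (by omega)
  let f : Finset (Fin q × Fin p) → Set (Fin q × Fin p) := fun R => nbhds G (R : Set _) ∩ Aᶜ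
  have hsub : cutNbhdFamily G A ⊆ ((P.image f : Finset _) : Set _) := by
    rintro T ⟨X, hXA, rfl⟩
    have key : ∃ R ⊆ X, R.ncard ≤ 2 ∧ nbhds G X ∩ Aᶜ = nbhds G R ∩ Aᶜ := by
      rcases X.eq_empty_or_nonempty with rfl | hX
      · exact ⟨∅, subset_rfl, by simp, rfl⟩
      · exact part1 X hXA hX
    obtain ⟨R, hRX, hRc, hRe⟩ := key
    rw [Finset.mem_coe, Finset.mem_image]
    refine ⟨R.toFinite.toFinset, ?_, ?_⟩
    · have hc : R.toFinite.toFinset.card = R.ncard := (Set.ncard_eq_toFinset_card R _).symm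
      have hs : R.toFinite.toFinset ⊆ F := by
        intro x hx
        simp only [Set.Finite.mem_toFinset, F] at hx ⊢
        exact hXA (hRX hx)
      simp only [P, Finset.mem_union, Finset.mem_powersetCard, hs, hc, true_and]
      omega
    · simp only [f, Set.Finite.coe_toFinset]
      exact hRe.symm
  calc (cutNbhdFamily G A).ncard ≤ ((P.image f : Finset _) : Set _).ncard :=
        Set.ncard_le_ncard hsub (Finset.finite_toSet _)
    _ = (P.image f).card := Set.ncard_coe_finset _
    _ ≤ P.card := Finset.card_image_le
    _ ≤ _ := hP
end

section
/- For all p, q ≥ 1, the Hsu-Stable-chain G on vertex set Fin q × Fin p — in which (i, j) and (i', j') are adjacent if and only if (i' = i + 1 and j ≤ j') or (i = i' + 1 and j' ≤ j) — is a bipartite permutation graph: it is bipartite (with parts given by the parity of the first coordinate), and it admits a permutation model, i.e. injective maps π, ρ : Fin q × Fin p → ℝ such that two distinct vertices u, v are adjacent if and only if (π(u) < π(v) and ρ(v) < ρ(u)) or (π(v) < π(u) and ρ(u) < ρ(v)). -/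
theorem hsu_stable_chain_is_bipartite_permutation (p q : ℕ) (hp : 1 ≤ p) (hq : 1 ≤ q)
    (G : SimpleGraph (Fin q × Fin p))
    (hG : ∀ u v : Fin q × Fin p, G.Adj u v ↔
      ((u.1 : ℕ) + 1 = (v.1 : ℕ) ∧ (u.2 : ℕ) ≤ (v.2 : ℕ)) ∨
      ((v.1 : ℕ) + 1 = (u.1 : ℕ) ∧ (v.2 : ℕ) ≤ (u.2 : ℕ))) :
    (∀ u v : Fin q × Fin p, G.Adj u v → (u.1 : ℕ) % 2 ≠ (v.1 : ℕ) % 2) ∧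
    ∃ π ρ : Fin q × Fin p → ℝ, Function.Injective π ∧ Function.Injective ρ ∧
      ∀ u v : Fin q × Fin p, u ≠ v →
        (G.Adj u v ↔ (π u < π v ∧ ρ v < ρ u) ∨ (π v < π u ∧ ρ u < ρ v)) := by
  refine ⟨fun u v h => by have := (hG u v).1 h; omega, ?_⟩
  -- position of a vertex along the strip is `i * p - j`; segments lean according to parity
  let f : Fin q × Fin p → ℤ := fun u =>
    2 * ((((u.1 : ℕ) * p : ℕ) : ℤ) - (u.2 : ℕ)) + ((u.1 : ℕ) % 2 : ℕ) * (2 * p + 1)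
  let g : Fin q × Fin p → ℤ := fun u =>
    2 * ((((u.1 : ℕ) * p : ℕ) : ℤ) - (u.2 : ℕ)) + (1 - ((u.1 : ℕ) % 2 : ℕ)) * (2 * p + 1)
  have step : ∀ i i' : ℕ, (i' = i + 1 → i' * p = i * p + p) ∧
      (i + 2 ≤ i' → i * p + 2 * p ≤ i' * p) := by
    intro i i'
    refine ⟨fun h => by subst h; ring, fun h => ?_⟩
    have := Nat.mul_le_mul_right p h
    linarith [add_mul i 2 p]
  have key : ∀ u v : Fin q × Fin p, u ≠ v → f u ≠ f v ∧ g u ≠ g v ∧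
      (G.Adj u v ↔ (f u < f v ∧ g v < g u) ∨ (f v < f u ∧ g u < g v)) := by
    rintro ⟨⟨i, hi⟩, ⟨j, hj⟩⟩ ⟨⟨i', hi'⟩, ⟨j', hj'⟩⟩ hne
    have hne' : i = i' → j ≠ j' := by
      rintro rfl rfl
      exact hne rfl
    rw [hG]
    simp only [f, g]
    obtain ⟨h1, h2⟩ := step i i'
    obtain ⟨h3, h4⟩ := step i' i
    have h5 : i = i' → i * p = i' * p := fun h => by rw [h]
    generalize i * p = a at *
    generalize i' * p = b at *
    have hc : i = i' ∨ i' = i + 1 ∨ i + 2 ≤ i' ∨ i = i' + 1 ∨ i' + 2 ≤ i := by omega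
    rcases Nat.mod_two_eq_zero_or_one i with e | e <;>
    rcases Nat.mod_two_eq_zero_or_one i' with e' | e' <;>
    rw [e, e'] <;> push_cast <;> rcases hc with h | h | h | h | h <;>
    refine ⟨?_, ?_, ?_⟩ <;> omega
  refine ⟨fun u => (f u : ℝ), fun u => (g u : ℝ), ?_, ?_, ?_⟩
  · intro u v h
    by_contra hne
    exact (key u v hne).1 (Int.cast_injective (α := ℝ) h)
  · intro u v h
    by_contra hne
    exact (key u v hne).2.1 (Int.cast_injective (α := ℝ) h)
  · intro u v hne
    simpa only [Int.cast_lt] using (key u v hne).2.2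
end

section
/- For all p, q ≥ 1, the Hsu-Clique-chain G on vertex set Fin q × Fin p — in which distinct (i, j) and (i', j') are adjacent if and only if i = i', or (i' = i + 1 and j ≤ j'), or (i = i' + 1 and j' ≤ j) — is a unit interval graph: there exists an injective map f : Fin q × Fin p → ℝ such that two distinct vertices u, v are adjacent if and only if |f(u) − f(v)| ≤ 1. -/
/-- Scaled comparison: the integer positions `p * i - j`. -/
lemma hsu_aux (p a b c d : ℤ) (hb : 0 ≤ b) (hb' : b < p) (hd : 0 ≤ d) (hd' : d < p) :
    (a = c ∨ (a + 1 = c ∧ b ≤ d) ∨ (c + 1 = a ∧ d ≤ b)) ↔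
      |(p * a - b) - (p * c - d)| ≤ p := by
  rw [abs_le]
  constructor
  · rintro (h | ⟨h, h'⟩ | ⟨h, h'⟩)
    · subst h; constructor <;> linarith
    · subst h; constructor <;> linarith
    · subst h; constructor <;> linarith
  · rintro ⟨h1, h2⟩
    have h3 : a < c + 2 := by
      by_contra! h
      nlinarith
    have h4 : c < a + 2 := by
      by_contra! h
      nlinarith
    have h5 : a = c ∨ a + 1 = c ∨ c + 1 = a := by omega
    rcases h5 with h | h | h
    · exact Or.inl h
    · subst h; exact Or.inr (Or.inl ⟨rfl, by linarith⟩)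
    · subst h; exact Or.inr (Or.inr ⟨rfl, by linarith⟩)

lemma hsu_inj (p a b c d : ℤ) (hb : 0 ≤ b) (hb' : b < p) (hd : 0 ≤ d) (hd' : d < p)
    (h : p * a - b = p * c - d) : a = c ∧ b = d := by
  have h3 : a < c + 1 := by
    by_contra! h
    nlinarith
  have h4 : c < a + 1 := by
    by_contra! h
    nlinarith
  have h5 : a = c := by omega
  subst h5
  exact ⟨rfl, by linarith⟩

theorem hsu_clique_chain_is_unit_interval (p q : ℕ) (hp : 1 ≤ p) (hq : 1 ≤ q)
    (G : SimpleGraph (Fin q × Fin p))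
    (hG : ∀ u v : Fin q × Fin p, u ≠ v → (G.Adj u v ↔
      u.1 = v.1 ∨
      ((u.1 : ℕ) + 1 = (v.1 : ℕ) ∧ (u.2 : ℕ) ≤ (v.2 : ℕ)) ∨
      ((v.1 : ℕ) + 1 = (u.1 : ℕ) ∧ (v.2 : ℕ) ≤ (u.2 : ℕ)))) :
    ∃ f : Fin q × Fin p → ℝ, Function.Injective f ∧
      ∀ u v : Fin q × Fin p, u ≠ v → (G.Adj u v ↔ |f u - f v| ≤ 1) := by
  have hp0 : (0 : ℝ) < p := by exact_mod_cast hp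
  refine ⟨fun u => (((p : ℤ) * (u.1 : ℕ) - (u.2 : ℕ) : ℤ) : ℝ) / p, ?_, ?_⟩
  · intro u v h
    have h' := (div_left_inj' hp0.ne').1 h
    have h2 := hsu_inj p _ _ _ _ (by omega) (by exact_mod_cast u.2.2) (by omega)
      (by exact_mod_cast v.2.2) (Int.cast_injective h')
    exact Prod.ext (Fin.ext (by exact_mod_cast h2.1)) (Fin.ext (by exact_mod_cast h2.2))
  · intro u v huv
    have key := hsu_aux p (u.1 : ℕ) (u.2 : ℕ) (v.1 : ℕ) (v.2 : ℕ) (by omega)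
      (by exact_mod_cast u.2.2) (by omega) (by exact_mod_cast v.2.2)
    rw [hG u v huv]
    simp only []
    rw [← sub_div, abs_div, abs_of_pos hp0, div_le_one hp0, Fin.ext_iff]
    rw [← Int.cast_sub, ← Int.cast_abs, ← Int.cast_natCast (R := ℝ) p, Int.cast_le, ← key]
    norm_cast
end

section
/- Let p ≥ 1 and q > 3p, and let G be the Hsu-Clique-chain on vertex set V = Fin q × Fin p (distinct (i, j) and (i', j') adjacent iff i = i', or (i' = i + 1 and j ≤ j'), or (i = i' + 1 and j' ≤ j)); set n = p·q. Then for every A ⊆ V with n ≤ 3|A| and 3|A| ≤ 2n (i.e. n/3 ≤ |A| ≤ 2n/3), the matrix M over the field ℤ/2ℤ with rows indexed by A and columns indexed by V ∖ A, where M(u, v) = 1 if u and v are adjacent and 0 otherwise, satisfies 2·rank(M) ≥ p. (Since every decomposition tree contains a balanced cut, this shows the Hsu-Clique-chain has rank-width at least p/2, and hence there exist unit interval graphs on n vertices with rank-width Ω(√n).) -/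
open scoped Classical in
theorem hcc_rank_ge {V S α : Type*} [Fintype V] [DecidableEq V] [Fintype S] [LinearOrder α]
    (G : SimpleGraph V) (A : Finset V) (f g : S → V)
    (hf : ∀ s, f s ∈ A) (hg : ∀ s, g s ∉ A) (r : S → α) (hr : Function.Injective r)
    (hd : ∀ s, G.Adj (f s) (g s)) (h : ∀ s t, G.Adj (f s) (g t) → r t ≤ r s) :
    Fintype.card S ≤ (Matrix.of fun (u : {x // x ∈ A}) (v : {x // x ∈ Aᶜ}) =>
        if G.Adj u.1 v.1 then (1 : ZMod 2) else 0).rank := by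
  set M := (Matrix.of fun (u : {x // x ∈ A}) (v : {x // x ∈ Aᶜ}) =>
        if G.Adj u.1 v.1 then (1 : ZMod 2) else 0) with hM
  letI : LinearOrder S := LinearOrder.lift' r hr
  let f' : S → {x // x ∈ A} := fun s => ⟨f s, hf s⟩
  let g' : S → {x // x ∈ Aᶜ} := fun s => ⟨g s, by simpa using hg s⟩
  have hdet : (M.submatrix f' g').det = 1 := by
    rw [Matrix.det_of_lowerTriangular]
    · apply Finset.prod_eq_one
      intro s _
      simp [M, f', g', hd s]
    · intro s t hst
      have hst' : r s < r t := hst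
      have : ¬ G.Adj (f s) (g t) := fun hh => absurd (h s t hh) (not_le.mpr hst')
      simp [M, f', g', this]
  have h1 : (M.submatrix f' g').rank = Fintype.card S :=
    Matrix.rank_of_isUnit _ ((Matrix.isUnit_iff_isUnit_det _).2 (by rw [hdet]; exact isUnit_one))
  rw [← h1]
  exact Matrix.rank_submatrix_le M f' g'

theorem hcc_cross {q p : ℕ} (P : Fin q → Prop) (a b : Fin q) (ha : P a) (hb : ¬ P b) :
    ∃ i i' : Fin q, (i : ℕ) + 1 = i' ∧ ((P i ∧ ¬ P i') ∨ (¬ P i ∧ P i')) := by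
  by_contra hc
  push Not at hc
  have key : ∀ k (hk : k < q) (h0 : 0 < q), (P ⟨k, hk⟩ ↔ P ⟨0, h0⟩) := by
    intro k
    induction k with
    | zero => intro _ _; rfl
    | succ k ih =>
      intro hk h0
      have := hc ⟨k, by omega⟩ ⟨k+1, hk⟩ rfl
      have := ih (by omega) h0
      tauto
  have h0 : 0 < q := by have := a.2; omega
  have h1 := key a a.2 h0
  have h2 := key b b.2 h0
  tauto

theorem hcc_count {q p : ℕ} (hp : 1 ≤ p) (hq : 3 * p < q) (B : Finset (Fin q × Fin p))
    (hB : p * q ≤ 3 * B.card) (R : ℕ)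
    (hR : ∀ T : Finset (Fin q), (∀ i ∈ T, ∃ b, (i, b) ∈ B) →
      (∀ i ∈ T, ∀ j ∈ T, (i : ℕ) % 2 = (j : ℕ) % 2) → T.card ≤ R) : p ≤ 2 * R := by
  classical
  let T : Finset (Fin q) := B.image Prod.fst
  have hT : ∀ i ∈ T, ∃ b, (i, b) ∈ B := by
    intro i hi
    simpa [T] using hi
  have hc : B.card ≤ T.card * p := by
    have : B ⊆ T ×ˢ (Finset.univ : Finset (Fin p)) := by
      intro x hx
      simp only [Finset.mem_product, Finset.mem_univ, and_true]
      exact Finset.mem_image_of_mem _ hx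
    simpa using Finset.card_le_card this
  have h3 : p < T.card := by
    by_contra hcon
    push Not at hcon
    nlinarith
  have e1 := hR (T.filter fun i => (i : ℕ) % 2 = 0) (fun i hi => hT i (Finset.mem_filter.1 hi).1)
    (fun i hi j hj => by rw [(Finset.mem_filter.1 hi).2, (Finset.mem_filter.1 hj).2])
  have e2 := hR (T.filter fun i => ¬ (i : ℕ) % 2 = 0) (fun i hi => hT i (Finset.mem_filter.1 hi).1)
    (fun i hi j hj => by
      have := (Finset.mem_filter.1 hi).2
      have := (Finset.mem_filter.1 hj).2
      omega)
  have := Finset.card_filter_add_card_filter_not (s := T) (fun i : Fin q => (i : ℕ) % 2 = 0)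
  omega

open scoped Classical in
theorem hsu_clique_chain_balanced_cut_rank (p q : ℕ) (hp : 1 ≤ p) (hq : 3 * p < q)
    (G : SimpleGraph (Fin q × Fin p))
    (hG : ∀ u v : Fin q × Fin p, u ≠ v → (G.Adj u v ↔
      u.1 = v.1 ∨
      ((u.1 : ℕ) + 1 = (v.1 : ℕ) ∧ (u.2 : ℕ) ≤ (v.2 : ℕ)) ∨
      ((v.1 : ℕ) + 1 = (u.1 : ℕ) ∧ (v.2 : ℕ) ≤ (u.2 : ℕ))))
    (n : ℕ) (hn : n = p * q)
    (A : Finset (Fin q × Fin p)) (h1 : n ≤ 3 * A.card) (h2 : 3 * A.card ≤ 2 * n) :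
    p ≤ 2 * (Matrix.of fun (u : {x // x ∈ A}) (v : {x // x ∈ Aᶜ}) =>
        if G.Adj u.1 v.1 then (1 : ZMod 2) else 0).rank := by
  by_cases hrowA : ∃ j, ∀ i, (i, j) ∈ A
  · obtain ⟨j, hj⟩ := hrowA
    have hcc := Finset.card_add_card_compl A
    simp only [Fintype.card_prod, Fintype.card_fin] at hcc
    refine hcc_count hp hq Aᶜ (by nlinarith) _ ?_
    intro T hT hpar
    haveI : Nonempty (Fin p) := ⟨j⟩
    choose! b hb using hT
    have hb' : ∀ i ∈ T, (i, b i) ∉ A := fun i hi => by simpa using hb i hi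
    have := hcc_rank_ge (S := T) G A (fun s => (s.1, j)) (fun s => (s.1, b s.1))
      (fun s => hj _) (fun s => hb' _ s.2) (fun s => s.1) Subtype.val_injective
      (fun s => by
        have hne : ((s.1, j) : Fin q × Fin p) ≠ (s.1, b s.1) := fun e =>
          hb' _ s.2 (e ▸ hj s.1)
        exact (hG _ _ hne).2 (Or.inl rfl))
      (fun s t hst => by
        have := (hG _ _ hst.ne).1 hst
        have := hpar _ s.2 _ t.2
        simp only [Fin.ext_iff] at *
        apply le_of_eq
        apply Fin.ext
        omega)
    simpa using this
  by_cases hrowB : ∃ j, ∀ i, (i, j) ∉ A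
  · obtain ⟨j, hj⟩ := hrowB
    refine hcc_count hp hq A (by omega) _ ?_
    intro T hT hpar
    haveI : Nonempty (Fin p) := ⟨j⟩
    choose! b hb using hT
    have := hcc_rank_ge (S := T) G A (fun s => (s.1, b s.1)) (fun s => (s.1, j))
      (fun s => hb _ s.2) (fun s => hj _) (fun s => s.1) Subtype.val_injective
      (fun s => by
        have hne : ((s.1, b s.1) : Fin q × Fin p) ≠ (s.1, j) := fun e =>
          hj s.1 (e ▸ hb _ s.2)
        exact (hG _ _ hne).2 (Or.inl rfl))
      (fun s t hst => by
        have := (hG _ _ hst.ne).1 hst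
        have := hpar _ s.2 _ t.2
        simp only [Fin.ext_iff] at *
        apply le_of_eq
        apply Fin.ext
        omega)
    simpa using this
  push Not at hrowA hrowB
  have hx : ∀ j, ∃ i i' : Fin q, (i : ℕ) + 1 = i' ∧
      (((i, j) ∈ A ∧ (i', j) ∉ A) ∨ ((i, j) ∉ A ∧ (i', j) ∈ A)) := by
    intro j
    obtain ⟨b, hb⟩ := hrowA j
    obtain ⟨a, ha⟩ := hrowB j
    exact hcc_cross (p := p) (fun i => (i, j) ∈ A) a b ha hb
  choose c d hcd hx using hx
  have e1 := hcc_rank_ge (S := {j // (c j, j) ∈ A}) G A (fun s => (c s.1, s.1))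
    (fun s => (d s.1, s.1)) (fun s => s.2)
    (fun s => by have := hx s.1; have := s.2; tauto)
    (fun s => toLex ((c s.1 : ℤ), -(s.1 : ℤ)))
    (fun s t hst => by
      have : ((c s.1 : ℤ), -(s.1 : ℤ)) = ((c t.1 : ℤ), -(t.1 : ℤ)) := toLex.injective hst
      simp only [Prod.mk.injEq] at this
      apply Subtype.ext; apply Fin.ext; omega)
    (fun s => by
      have := hcd s.1
      refine (hG _ _ ?_).2 (Or.inr (Or.inl ⟨this, le_rfl⟩))
      intro e
      have := congrArg (fun x => (x.1 : ℕ)) e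
      simp only at this
      omega)
    (fun s t hst => by
      have := (hG _ _ hst.ne).1 hst
      have := hcd s.1
      have := hcd t.1
      simp only [Fin.ext_iff] at *
      rw [Prod.Lex.toLex_le_toLex]
      simp only
      omega)
  have e2 := hcc_rank_ge (S := {j // ¬ (c j, j) ∈ A}) G A (fun s => (d s.1, s.1))
    (fun s => (c s.1, s.1)) (fun s => by have := hx s.1; have := s.2; tauto)
    (fun s => s.2)
    (fun s => toLex (-(c s.1 : ℤ), (s.1 : ℤ)))
    (fun s t hst => by
      have : (-(c s.1 : ℤ), (s.1 : ℤ)) = (-(c t.1 : ℤ), (t.1 : ℤ)) := toLex.injective hst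
      simp only [Prod.mk.injEq] at this
      apply Subtype.ext; apply Fin.ext; omega)
    (fun s => by
      have := hcd s.1
      refine (hG _ _ ?_).2 (Or.inr (Or.inr ⟨this, le_rfl⟩))
      intro e
      have := congrArg (fun x => (x.1 : ℕ)) e
      simp only at this
      omega)
    (fun s t hst => by
      have := (hG _ _ hst.ne).1 hst
      have := hcd s.1
      have := hcd t.1
      simp only [Fin.ext_iff] at *
      rw [Prod.Lex.toLex_le_toLex]
      simp only
      omega)
  have e3 := Fintype.card_subtype_compl (fun j : Fin p => (c j, j) ∈ A)
  have e4 := Fintype.card_subtype_le (fun j : Fin p => (c j, j) ∈ A)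
  rw [Fintype.card_fin] at e3 e4
  omega
end

section
/- Let G be a finite simple graph, A ⊆ V(G), and let k ≥ 1 and d ≥ 1 be integers. Suppose that for every S ⊆ A there exists R ⊆ S with |R| ≤ k and N(S) ∩ (V(G) ∖ A) = N(R) ∩ (V(G) ∖ A). Then for every S ⊆ A there exists R' ⊆ S with |R'| ≤ d·k such that R' is d-neighbour equivalent to S with respect to A, i.e. for every v ∈ V(G) ∖ A, min(d, |N(v) ∩ S|) = min(d, |N(v) ∩ R'|). -/
theorem small_representatives_d_neighbour {V : Type*} [Fintype V] (G : SimpleGraph V)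
    (A : Set V) (k d : ℕ) (hk : 1 ≤ k) (hd : 1 ≤ d)
    (hrep : ∀ S ⊆ A, ∃ R ⊆ S, R.ncard ≤ k ∧ nbhds G S ∩ Aᶜ = nbhds G R ∩ Aᶜ) :
    ∀ S ⊆ A, ∃ R' ⊆ S, R'.ncard ≤ d * k ∧
      ∀ v ∈ Aᶜ, min d (G.neighborSet v ∩ S).ncard = min d (G.neighborSet v ∩ R').ncard := by
  clear hd
  intro S hS
  induction d with
  | zero => exact ⟨∅, Set.empty_subset _, by simp, by simp⟩
  | succ d ih =>
    obtain ⟨P, hPS, hPc, hP⟩ := ih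
    obtain ⟨R, hRS, hRc, hR⟩ := hrep (S \ P) (Set.sdiff_subset.trans hS)
    refine ⟨P ∪ R, Set.union_subset hPS (hRS.trans Set.sdiff_subset), ?_, ?_⟩
    · have := Set.ncard_union_le P R
      rw [Nat.succ_mul]
      omega
    · intro v hv
      have h1 := hP v hv
      have hsub : G.neighborSet v ∩ (P ∪ R) ⊆ G.neighborSet v ∩ S :=
        Set.inter_subset_inter_right _
          (Set.union_subset hPS (hRS.trans Set.sdiff_subset))
      have h2 := Set.ncard_le_ncard hsub (Set.toFinite _)
      by_cases hx : ∃ x ∈ S \ P, G.Adj x v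
      · have hm : v ∈ nbhds G (S \ P) ∩ Aᶜ := ⟨hx, hv⟩
        rw [hR] at hm
        obtain ⟨⟨r, hr, hrv⟩, -⟩ := hm
        obtain ⟨x, hxS, hxv⟩ := hx
        have h3 : (G.neighborSet v ∩ P).ncard < (G.neighborSet v ∩ (P ∪ R)).ncard := by
          apply Set.ncard_lt_ncard _ (Set.toFinite _)
          refine ⟨Set.inter_subset_inter_right _ Set.subset_union_left, fun h => ?_⟩
          exact (hRS hr).2 (h ⟨hrv.symm, Or.inr hr⟩).2
        omega
      · have h4 : G.neighborSet v ∩ S ⊆ G.neighborSet v ∩ (P ∪ R) := by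
          rintro y ⟨hy, hyS⟩
          refine ⟨hy, Or.inl ?_⟩
          by_contra hyP
          exact hx ⟨y, ⟨hyS, hyP⟩, SimpleGraph.Adj.symm hy⟩
        rw [Set.Subset.antisymm hsub h4]
end

section
/- Let p, q ≥ 1 and let G be the Hsu-Clique-chain on vertex set Fin q × Fin p, in which distinct (i, j) and (i', j') are adjacent if and only if i = i', or (i' = i + 1 and j ≤ j'), or (i = i' + 1 and j' ≤ j). Order the vertices lexicographically: (i, j) ≤ (i', j') iff i < i' or (i = i' and j ≤ j'). Then for every initial segment A of this order, every nonempty subset X ⊆ A has a subset R ⊆ X with |R| ≤ 2 and N(X) ∩ (V(G) ∖ A) = N(R) ∩ (V(G) ∖ A); consequently the cut-neighbourhood family of A has at most 1 + |A| + |A|(|A|−1)/2 elements. (Together with the rank lower bound, this exhibits unit interval graphs whose boolean-width is O(log n) while their rank-width is Ω(√n).) -/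
theorem hsu_clique_chain_cut_nbhds (p q : ℕ) (hp : 1 ≤ p) (hq : 1 ≤ q)
    (G : SimpleGraph (Fin q × Fin p))
    (hG : ∀ u v : Fin q × Fin p, u ≠ v → (G.Adj u v ↔
      u.1 = v.1 ∨
      ((u.1 : ℕ) + 1 = (v.1 : ℕ) ∧ (u.2 : ℕ) ≤ (v.2 : ℕ)) ∨
      ((v.1 : ℕ) + 1 = (u.1 : ℕ) ∧ (v.2 : ℕ) ≤ (u.2 : ℕ))))
    (A : Set (Fin q × Fin p)) (hinit : ∀ v ∈ A, ∀ u, lexLe u v → u ∈ A) :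
    (∀ X : Set (Fin q × Fin p), X ⊆ A → X.Nonempty →
        ∃ R ⊆ X, R.ncard ≤ 2 ∧ nbhds G X ∩ Aᶜ = nbhds G R ∩ Aᶜ) ∧
      (cutNbhdFamily G A).ncard ≤ 1 + A.ncard + A.ncard * (A.ncard - 1) / 2 := by
  have hsub : ∀ u ∈ A, ∀ v ∈ A,
      ((u.1 : ℕ) < (v.1 : ℕ) ∨ (u.1 = v.1 ∧ (v.2 : ℕ) ≤ (u.2 : ℕ))) →
      nbhds G {u} ∩ Aᶜ ⊆ nbhds G {v} ∩ Aᶜ := by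
    rintro u hu v hv huv w ⟨⟨u', hu', hw⟩, hwA⟩
    obtain rfl : u' = u := hu'
    refine ⟨⟨v, rfl, ?_⟩, hwA⟩
    have h1 : u' ≠ w := fun h => hwA (h ▸ hu)
    have h2 : v ≠ w := fun h => hwA (h ▸ hv)
    have h3 : ¬ lexLe w u' := fun h => hwA (hinit _ hu _ h)
    have h4 : ¬ lexLe w v := fun h => hwA (hinit _ hv _ h)
    rw [hG _ _ h1] at hw
    rw [hG _ _ h2]
    simp only [lexLe, Fin.ext_iff] at *
    omega
  have hchain : ∀ u ∈ A, ∀ v ∈ A, nbhds G {u} ∩ Aᶜ ⊆ nbhds G {v} ∩ Aᶜ ∨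
      nbhds G {v} ∩ Aᶜ ⊆ nbhds G {u} ∩ Aᶜ := by
    intro u hu v hv
    by_cases h : (u.1 : ℕ) < (v.1 : ℕ) ∨ (u.1 = v.1 ∧ (v.2 : ℕ) ≤ (u.2 : ℕ))
    · exact Or.inl (hsub u hu v hv h)
    · refine Or.inr (hsub v hv u hu ?_)
      simp only [Fin.ext_iff] at *
      omega
  -- a single vertex already represents every nonempty `X`
  have hrep : ∀ X : Set (Fin q × Fin p), X ⊆ A → X.Nonempty →
      ∃ x ∈ X, nbhds G X ∩ Aᶜ = nbhds G {x} ∩ Aᶜ := by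
    intro X hX hne
    obtain ⟨x, hx, hmax⟩ := Set.exists_max_image X
      (fun x => (nbhds G {x} ∩ Aᶜ).ncard) (Set.toFinite X) hne
    refine ⟨x, hx, Set.Subset.antisymm ?_ ?_⟩
    · rintro w ⟨⟨u, hu, hw⟩, hwA⟩
      have hwu : w ∈ nbhds G {u} ∩ Aᶜ := ⟨⟨u, rfl, hw⟩, hwA⟩
      rcases hchain u (hX hu) x (hX hx) with h | h
      · exact h hwu
      · rw [Set.eq_of_subset_of_ncard_le h (hmax u hu) (Set.toFinite _)]
        exact hwu
    · rintro w ⟨⟨u, hu, hw⟩, hwA⟩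
      obtain rfl : u = x := hu
      exact ⟨⟨u, hx, hw⟩, hwA⟩
  refine ⟨?_, ?_⟩
  · intro X hX hne
    obtain ⟨x, hx, h⟩ := hrep X hX hne
    exact ⟨{x}, Set.singleton_subset_iff.2 hx, by simp, h⟩
  · have hfam : cutNbhdFamily G A ⊆
        insert ∅ ((fun x => nbhds G {x} ∩ Aᶜ) '' A) := by
      rintro S ⟨X, hX, rfl⟩
      rcases X.eq_empty_or_nonempty with rfl | hne
      · left
        simp [nbhds]
      · right
        obtain ⟨x, hx, h⟩ := hrep X hX hne
        exact ⟨x, hX hx, h.symm⟩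
    have h1 := Set.ncard_le_ncard hfam (Set.toFinite _)
    have h2 := Set.ncard_insert_le ∅ ((fun x => nbhds G {x} ∩ Aᶜ) '' A)
    have h3 := Set.ncard_image_le (f := fun x => nbhds G {x} ∩ Aᶜ) (Set.toFinite A)
    omega
end
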